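/- Assume Slater's condition: there exist P̃ ∈ P(R) and η > 0 such that E_{P̃}[C(·, b)] − v ≤ −η for every b ∈ R. Let ℵ ≥ 1 and T ≥ ℵ + 1 be integers. If the dual variables of Algorithm 1 satisfy λ_{T+1} > λ_{T−ℵ}, then η Σ_{t=T−ℵ}^{T} λ_t ≤ (ℵ+1) ( B/μ + (α/2)|R|Θ² + Θ ) + 1/α, where B = (1/2) μ² (4Θ² + v²). -/

import Mathlib

open Finset

/-!
Drift-plus-penalty argument. Write `g t` for the expected violation-plus-transfer cost of `P t`
minus `v`, and `D t = ‖Ptilde - P t‖²`. The proximal objective is affine plus `1/(2α)` times a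
squared distance, so its minimizer `P t` beats `Ptilde` with the additional margin `D t / (2α)`
(`prox_three_point`). Combined with Slater's condition and `0 ≤ CR ≤ Θ` this gives
`η λ_t + λ_t g_t ≤ Θ + (D (t-1) - D t) / (2α)`. The dual update gives
`λ_{t+1}² ≤ (λ_t + μ g_t)²`, hence `λ_t g_t ≥ (λ_{t+1}² - λ_t²) / (2μ) - B / μ`, because
`g_t² ≤ 4Θ² + v²`. Summing over the window telescopes both differences: the dual one has a
favourable sign as `λ_{T+1} > λ_{T-ℵ} ≥ 0`, and two points of the simplex are at squared distance
at most `2` (`simplex_dist_sq_le`), which yields the term `1/α`. The term `(α/2)|R|Θ²` of the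
bound is not needed and is discarded as nonnegative.
-/

/-- Three-point inequality for a proximal step. The function `F` only has to be affine along the
segment from `x` to `y`, and `x` only has to minimize the proximal objective on that segment. -/
lemma prox_three_point {E : Type*} [NormedAddCommGroup E] [InnerProductSpace ℝ E]
    (F : E → ℝ) (c : ℝ) (x y p : E)
    (haff : ∀ s : ℝ, F (x + s • (y - x)) = F x + s * (F y - F x))
    (hmin : ∀ s : ℝ, 0 < s → s ≤ 1 →
      F x + c * ‖x - p‖ ^ 2 ≤ F (x + s • (y - x)) + c * ‖x + s • (y - x) - p‖ ^ 2) :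
    F x + c * ‖x - p‖ ^ 2 + c * ‖y - x‖ ^ 2 ≤ F y + c * ‖y - p‖ ^ 2 := by
  have expand : ∀ s : ℝ, ‖x + s • (y - x) - p‖ ^ 2 =
      ‖x - p‖ ^ 2 + 2 * (s * inner ℝ (x - p) (y - x)) + s ^ 2 * ‖y - x‖ ^ 2 := by
    intro s
    have h : x + s • (y - x) - p = (x - p) + s • (y - x) := by abel
    rw [h, norm_add_sq_real, inner_smul_right, norm_smul, mul_pow, Real.norm_eq_abs, sq_abs]
  set A : ℝ := F y - F x + 2 * c * inner ℝ (x - p) (y - x) with hA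
  set N : ℝ := c * ‖y - x‖ ^ 2 with hN
  have key : ∀ s : ℝ, 0 < s → s ≤ 1 → 0 ≤ A + s * N := by
    intro s hs hs1
    have h := hmin s hs hs1
    rw [haff, expand] at h
    have h2 : 0 ≤ s * (A + s * N) := by rw [hA, hN]; linarith
    exact nonneg_of_mul_nonneg_right h2 hs
  -- First-order optimality: the directional derivative at `x` towards `y`, obtained as `s → 0+`.
  have hA0 : 0 ≤ A := by
    have ht : Filter.Tendsto (fun s : ℝ => A + s * N) (nhdsWithin 0 (Set.Ioi 0)) (nhds A) := by
      have hc : Continuous (fun s : ℝ => A + s * N) := by fun_prop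
      have h0 := hc.tendsto 0
      simp only [zero_mul, add_zero] at h0
      exact h0.mono_left nhdsWithin_le_nhds
    refine ge_of_tendsto ht ?_
    filter_upwards [Ioc_mem_nhdsGT (zero_lt_one' ℝ)] with s hs
    exact key s hs.1 hs.2
  have h1 := expand 1
  rw [one_smul, add_sub_cancel] at h1
  rw [h1]
  linarith

lemma simplex_dist_sq_le {R : Type*} [Fintype R] (p q : EuclideanSpace ℝ R)
    (hp : (∀ a, 0 ≤ p a) ∧ ∑ a, p a = 1) (hq : (∀ a, 0 ≤ q a) ∧ ∑ a, q a = 1) :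
    ‖p - q‖ ^ 2 ≤ 2 := by
  have le_one : ∀ r : EuclideanSpace ℝ R, ((∀ a, 0 ≤ r a) ∧ ∑ a, r a = 1) → ∀ a, r a ≤ 1 := by
    intro r hr a
    rw [← hr.2]
    exact Finset.single_le_sum (fun i _ => hr.1 i) (Finset.mem_univ a)
  rw [EuclideanSpace.real_norm_sq_eq]
  calc ∑ a, (p - q) a ^ 2 ≤ ∑ a, (p a + q a) := by
        refine Finset.sum_le_sum fun a _ => ?_
        have h1 := hp.1 a
        have h2 := hq.1 a
        have h3 := le_one p hp a
        have h4 := le_one q hq a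
        simp only [PiLp.sub_apply]
        nlinarith [mul_nonneg h1 h2, mul_nonneg h1 (sub_nonneg.2 h3),
          mul_nonneg h2 (sub_nonneg.2 h4)]
    _ = 2 := by rw [Finset.sum_add_distrib, hp.2, hq.2]; norm_num

lemma simplex_expect_bounds {R : Type*} [Fintype R] (p : EuclideanSpace ℝ R)
    (hp : (∀ a, 0 ≤ p a) ∧ ∑ a, p a = 1) (f : R → ℝ) (K : ℝ)
    (hf : ∀ a, 0 ≤ f a ∧ f a ≤ K) :
    0 ≤ ∑ a, p a * f a ∧ ∑ a, p a * f a ≤ K := by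
  refine ⟨Finset.sum_nonneg fun a _ => mul_nonneg (hp.1 a) (hf a).1, ?_⟩
  calc ∑ a, p a * f a ≤ ∑ a, p a * K :=
        Finset.sum_le_sum fun a _ => mul_le_mul_of_nonneg_left (hf a).2 (hp.1 a)
    _ = K := by rw [← Finset.sum_mul, hp.2, one_mul]

lemma expect_segment {R : Type*} [Fintype R] (x y : EuclideanSpace ℝ R) (s : ℝ) (f : R → ℝ) :
    ∑ a, (x + s • (y - x)) a * f a =
      ∑ a, x a * f a + s * (∑ a, y a * f a - ∑ a, x a * f a) := by
  rw [← Finset.sum_sub_distrib, Finset.mul_sum, ← Finset.sum_add_distrib]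
  refine Finset.sum_congr rfl fun a _ => ?_
  simp only [PiLp.add_apply, PiLp.smul_apply, PiLp.sub_apply, smul_eq_mul]
  ring

lemma simplex_segment {R : Type*} [Fintype R] (x y : EuclideanSpace ℝ R)
    (hx : (∀ a, 0 ≤ x a) ∧ ∑ a, x a = 1) (hy : (∀ a, 0 ≤ y a) ∧ ∑ a, y a = 1)
    (s : ℝ) (hs : 0 < s) (hs1 : s ≤ 1) :
    (∀ a, 0 ≤ (x + s • (y - x)) a) ∧ ∑ a, (x + s • (y - x)) a = 1 := by
  constructor
  · intro a
    simp only [PiLp.add_apply, PiLp.smul_apply, PiLp.sub_apply, smul_eq_mul]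
    nlinarith [mul_nonneg hs.le (hy.1 a), mul_nonneg (sub_nonneg.2 hs1) (hx.1 a)]
  · have h := expect_segment x y s (fun _ => 1)
    simp only [mul_one, hx.2, hy.2] at h
    rw [h]; ring

theorem stmt14
    {R : Type*} [Fintype R] [Nonempty R]
    (CR : R → ℝ) (CV CT : R → R → ℝ) (Θ v α μ : ℝ)
    (hΘ : 0 < Θ) (hv : 0 < v) (hα : 0 < α) (hμ : 0 < μ)
    (hCR : ∀ a : R, 0 ≤ CR a ∧ CR a ≤ Θ)
    (hCV : ∀ a c : R, 0 ≤ CV a c ∧ CV a c ≤ Θ)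
    (hCT : ∀ a c : R, 0 ≤ CT a c ∧ CT a c ≤ Θ)
    (b : ℕ → R) (P : ℕ → EuclideanSpace ℝ R) (lam : ℕ → ℝ)
    (hP0 : (∀ a : R, 0 ≤ P 0 a) ∧ ∑ a : R, P 0 a = 1)
    (hlam1 : 0 ≤ lam 1)
    (hPmem : ∀ t : ℕ, 1 ≤ t → (∀ a : R, 0 ≤ P t a) ∧ ∑ a : R, P t a = 1)
    (hPmin : ∀ t : ℕ, 1 ≤ t → ∀ Q : EuclideanSpace ℝ R,
      ((∀ a : R, 0 ≤ Q a) ∧ ∑ a : R, Q a = 1) →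
      (∑ a : R, P t a * CR a) +
        lam t * ((∑ a : R, P t a * (CV a (b (t-1)) + CT a (b (t-1)))) - v) +
        (1/(2*α)) * ‖P t - P (t-1)‖^2 ≤
      (∑ a : R, Q a * CR a) +
        lam t * ((∑ a : R, Q a * (CV a (b (t-1)) + CT a (b (t-1)))) - v) +
        (1/(2*α)) * ‖Q - P (t-1)‖^2)
    (hlam : ∀ t : ℕ, 1 ≤ t →
      lam (t+1) = max 0 (lam t + μ * ((∑ a : R, P t a * (CV a (b (t-1)) + CT a (b (t-1)))) - v)))
    (Ptilde : EuclideanSpace ℝ R) (η : ℝ) (hη : 0 < η)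
    (hPtilde : (∀ a : R, 0 ≤ Ptilde a) ∧ ∑ a : R, Ptilde a = 1)
    (hSlater : ∀ c : R, (∑ a : R, Ptilde a * (CV a c + CT a c)) - v ≤ -η)
    (ℵ T : ℕ) (hℵ : 1 ≤ ℵ) (hT : ℵ + 1 ≤ T)
    (hgt : lam (T - ℵ) < lam (T + 1)) :
    η * ∑ t ∈ Finset.Icc (T - ℵ) T, lam t ≤
      ((ℵ:ℝ) + 1) * (((1/2) * μ^2 * (4*Θ^2 + v^2)) / μ +
        (α/2) * (Fintype.card R : ℝ) * Θ^2 + Θ) + 1/α := by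
  have hmem : ∀ t, (∀ a : R, 0 ≤ P t a) ∧ ∑ a : R, P t a = 1 := by
    intro t
    rcases Nat.eq_zero_or_pos t with rfl | h
    · exact hP0
    · exact hPmem t h
  have hlam0 : ∀ t, 1 ≤ t → 0 ≤ lam t := by
    intro t ht
    rcases Nat.eq_or_lt_of_le ht with rfl | h
    · exact hlam1
    · obtain ⟨k, rfl⟩ : ∃ k, t = k + 1 := ⟨t - 1, by omega⟩
      rw [hlam k (by omega)]
      exact le_max_left _ _
  set K : ℝ := ((1/2) * μ^2 * (4*Θ^2 + v^2)) / μ + Θ with hK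
  have step : ∀ t, 1 ≤ t → η * lam t ≤ K - (lam (t+1) ^ 2 - lam t ^ 2) / (2 * μ)
      + 1 / (2 * α) * (‖Ptilde - P (t-1)‖ ^ 2 - ‖Ptilde - P t‖ ^ 2) := by
    intro t ht
    have h3 := prox_three_point
      (fun Q : EuclideanSpace ℝ R => (∑ a : R, Q a * CR a) +
        lam t * ((∑ a : R, Q a * (CV a (b (t-1)) + CT a (b (t-1)))) - v))
      (1 / (2 * α)) (P t) Ptilde (P (t-1))
      (by intro s; simp only [expect_segment]; ring)
      (fun s hs hs1 => hPmin t ht _ (simplex_segment _ _ (hmem t) hPtilde s hs hs1))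
    simp only at h3
    have hS := mul_le_mul_of_nonneg_left (hSlater (b (t-1))) (hlam0 t ht)
    have hR1 := (simplex_expect_bounds (P t) (hmem t) CR Θ hCR).1
    have hR2 := (simplex_expect_bounds Ptilde hPtilde CR Θ hCR).2
    have hC := simplex_expect_bounds (P t) (hmem t)
      (fun a => CV a (b (t-1)) + CT a (b (t-1))) (2 * Θ)
      (fun a => ⟨add_nonneg (hCV a _).1 (hCT a _).1,
        by linarith [(hCV a (b (t-1))).2, (hCT a (b (t-1))).2]⟩)
    have hl := hlam t ht
    simp only at hC
    set G : ℝ := ∑ a : R, P t a * (CV a (b (t-1)) + CT a (b (t-1))) with hG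
    have hprox : 0 ≤ 1 / (2 * α) * ‖P t - P (t-1)‖ ^ 2 := by positivity
    have hg : (G - v) ^ 2 ≤ 4 * Θ ^ 2 + v ^ 2 := by
      nlinarith [mul_nonneg hC.1 hv.le, mul_nonneg hC.1 (sub_nonneg.2 hC.2),
        mul_nonneg hΘ.le (sub_nonneg.2 hC.2)]
    have hsq : lam (t+1) ^ 2 ≤ (lam t + μ * (G - v)) ^ 2 := by
      rw [hl]
      rcases max_cases 0 (lam t + μ * (G - v)) with ⟨h, _⟩ | ⟨h, _⟩
      · rw [h]; nlinarith [sq_nonneg (lam t + μ * (G - v))]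
      · rw [h]
    have hdrift : (lam (t+1) ^ 2 - lam t ^ 2) / (2 * μ) ≤
        lam t * (G - v) + ((1/2) * μ^2 * (4*Θ^2 + v^2)) / μ := by
      have e : lam t * (G - v) + ((1/2) * μ^2 * (4*Θ^2 + v^2)) / μ =
          (2 * μ * (lam t * (G - v)) + μ^2 * (4*Θ^2 + v^2)) / (2 * μ) := by
        field_simp
      rw [e]
      refine div_le_div_of_nonneg_right ?_ (by positivity)
      nlinarith [mul_le_mul_of_nonneg_left hg (sq_nonneg μ)]
    rw [hK]
    linarith
  obtain ⟨s, rfl⟩ : ∃ s, T = s + ℵ := ⟨T - ℵ, by omega⟩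
  have hs : 1 ≤ s := by omega
  rw [Nat.add_sub_cancel] at hgt ⊢
  have tele : ∀ n : ℕ, η * ∑ t ∈ Finset.Icc s (s + n), lam t ≤
      ((n:ℝ) + 1) * K - (lam (s + n + 1) ^ 2 - lam s ^ 2) / (2 * μ)
      + 1 / (2 * α) * (‖Ptilde - P (s-1)‖ ^ 2 - ‖Ptilde - P (s + n)‖ ^ 2) := by
    intro n
    induction n with
    | zero => simpa using step s hs
    | succ n ih =>
      have h := step (s + n + 1) (by omega)
      rw [Nat.add_sub_cancel] at h
      rw [← add_assoc, Finset.sum_Icc_succ_top (by omega), mul_add]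
      push_cast
      rw [sub_div] at h ih ⊢
      linarith
  have h := tele ℵ
  have hD := simplex_dist_sq_le Ptilde (P (s-1)) hPtilde (hmem (s-1))
  have hl0 := hlam0 s hs
  have h1 : 0 ≤ (lam (s + ℵ + 1) ^ 2 - lam s ^ 2) / (2 * μ) := by
    apply div_nonneg _ (by positivity)
    nlinarith
  have h2 : 1 / (2 * α) * (‖Ptilde - P (s-1)‖ ^ 2 - ‖Ptilde - P (s + ℵ)‖ ^ 2) ≤ 1 / α := by
    have e : 1 / α = 1 / (2 * α) * 2 := by field_simp
    rw [e]
    exact mul_le_mul_of_nonneg_left (by linarith [sq_nonneg ‖Ptilde - P (s + ℵ)‖]) (by positivity)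
  have h4 : 0 ≤ ((ℵ:ℝ) + 1) * ((α/2) * (Fintype.card R : ℝ) * Θ^2) := by positivity
  rw [hK] at h
  linarith
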